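/- For d = 3 and 1/3 ≤ p_1 < p_2 ≤ 1, the pair (L*(p_2), L**(p_2)) stochastically dominates (L*(p_1), L**(p_1)) in the sense that there exists a coupling with L*(p_1) ≤ L*(p_2) and L**(p_1) ≤ L**(p_2) almost surely. -/

import Mathlib

/-!
Write `s = √(3p)` and `a l = s * eta3 p l`. Two facts about the weights drive the proof.

* Analytic: `∑ l, a l = q` with `q = s (1 - etaInf3 p)`, so that the stated masses do form a
  probability law. The pair `(s, q)` lies on the conic `s² + s q + q² = 3`, hence
  `s (3 - s²) = q (3 - q²)`. Since `a l` depends on `s` only through `s (3 - s²)`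
  (`mul_eta3_sq`), `∑ a l` equals `q ∑ eta3 (q²/3) l`, and `q²/3 ≤ 1/3`. There
  `∑ eta3 = 1`: expanding in powers of `p`, the coefficients are finite differences of order
  larger than the degree and vanish, which gives the identity for small `p`
  (`hasSum_eta3_small`); the identity theorem extends it to `p < 1/3`
  (`hasSum_eta3_of_lt`), and a monotone limit to `p = 1/3`.
* Monotone: each `a l` decreases in `p`, because `s (3 - s²)` decreases for `s ≥ 1`
  (`mul_eta3_anti`), `f3 ≤ 1`, and `f3` decreases (`f3_anti`), as `q` is a concave function of `s`.

Two laws on `ℕ∞` with pointwise ordered masses on `ℕ` are coupled monotonically by sending each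
finite value `k` either to itself or to `∞` (`exists_coupling`). Applying this to the first
coordinate, and then conditionally to the second one (`exists_coupling_pair`), gives the result.
-/

noncomputable def c3 (l : ℕ) : ℝ := (Nat.choose (3 * l) l : ℝ) / (2 * l + 1)

noncomputable def eta3 (p : ℝ) (l : ℕ) : ℝ := c3 l * p ^ l * (1 - p) ^ (2 * l + 1)

noncomputable def etaInf3 (p : ℝ) : ℝ :=
  (3 * Real.sqrt p - Real.sqrt (4 - 3 * p)) / (2 * Real.sqrt p)

noncomputable def f3 (p : ℝ) : ℝ :=
  (Real.sqrt (3 * p) - 1) / (1 - Real.sqrt (3 * p) * (1 - etaInf3 p))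

/-- The joint probability mass function of the pair `(L*(p), L**(p))` on
`(ℕ ∪ {∞})²`. -/
noncomputable def jointP (p : ℝ) (x : ℕ∞ × ℕ∞) : ℝ :=
  match x with
  | (some k, some l) => Real.sqrt (3 * p) * eta3 p k * (Real.sqrt (3 * p) * eta3 p l)
  | (some k, none) =>
      Real.sqrt (3 * p) * eta3 p k * (1 - Real.sqrt (3 * p) * (1 - etaInf3 p))
  | (none, some l) =>
      (1 - Real.sqrt (3 * p) * (1 - etaInf3 p)) * (Real.sqrt (3 * p) * eta3 p l * f3 p)
  | (none, none) => p * etaInf3 p ^ 2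

/-! ### Vanishing alternating sums of the coefficients -/

/-- The `(m + 1)`-st finite difference of `l ↦ (3l).choose m` vanishes: the sum is the coefficient
of `X ^ m` in `((1 + X) ^ 3 - 1) ^ (m + 1)`, which is divisible by `X ^ (m + 1)`. -/
theorem choose_alternating_sum (m : ℕ) :
    ∑ x ∈ Finset.HasAntidiagonal.antidiagonal (m + 1),
      (-1 : ℝ) ^ x.2 * ((m + 1).choose x.1 : ℝ) * ((3 * x.1).choose m : ℝ) = 0 := by
  have h := congrArg (fun P : Polynomial ℝ => P.coeff m)
    (add_pow ((1 + Polynomial.X : Polynomial ℝ) ^ 3) (-1) (m + 1))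
  have hf : ((1 + Polynomial.X : Polynomial ℝ) ^ 3 + -1) ^ (m + 1)
      = Polynomial.X ^ (m + 1) * (3 + 3 * Polynomial.X + Polynomial.X ^ 2) ^ (m + 1) := by
    rw [← mul_pow]; congr 1; ring
  simp only [hf, Polynomial.coeff_X_pow_mul', Polynomial.finsetSum_coeff] at h
  rw [if_neg (by omega)] at h
  rw [Finset.Nat.sum_antidiagonal_eq_sum_range_succ_mk, h]
  refine Finset.sum_congr rfl fun k _ => ?_
  have : ((1 + Polynomial.X : Polynomial ℝ) ^ 3) ^ k * (-1) ^ (m + 1 - k) * ((m + 1).choose k : Polynomial ℝ)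
      = Polynomial.C ((-1 : ℝ) ^ (m + 1 - k) * ((m + 1).choose k : ℝ)) * (1 + Polynomial.X) ^ (3 * k) := by
    simp [pow_mul]; ring
  rw [this, Polynomial.coeff_C_mul, Polynomial.coeff_one_add_X_pow]

theorem c3_mul_choose {m l j : ℕ} (h : l + j = m + 1) :
    c3 l * ((2 * l + 1).choose j : ℝ) * (m + 1) = ((m + 1).choose l : ℝ) * ((3 * l).choose m : ℝ) := by
  unfold c3
  by_cases hj : j ≤ 2 * l + 1
  · obtain ⟨r, hr⟩ := Nat.exists_eq_add_of_le hj
    have e1 := Nat.add_choose_mul_factorial_mul_factorial (2 * l) l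
    have e2 := Nat.add_choose_mul_factorial_mul_factorial r j
    have e3 := Nat.add_choose_mul_factorial_mul_factorial j l
    have e4 := Nat.add_choose_mul_factorial_mul_factorial r m
    rw [show 2 * l + l = 3 * l by ring] at e1
    rw [add_comm r j, ← hr, Nat.factorial_succ] at e2
    rw [add_comm j l, h, Nat.factorial_succ] at e3
    rw [show r + m = 3 * l by omega] at e4
    have p1 : (0:ℝ) < l.factorial := by positivity
    have p2 : (0:ℝ) < (2 * l).factorial := by positivity
    have p3 : (0:ℝ) < j.factorial := by positivity
    have p4 : (0:ℝ) < r.factorial := by positivity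
    have p5 : (0:ℝ) < m.factorial := by positivity
    replace e1 := congrArg (Nat.cast : ℕ → ℝ) e1
    replace e2 := congrArg (Nat.cast : ℕ → ℝ) e2
    replace e3 := congrArg (Nat.cast : ℕ → ℝ) e3
    replace e4 := congrArg (Nat.cast : ℕ → ℝ) e4
    push_cast at e1 e2 e3 e4
    rw [← eq_div_iff (by positivity), ← eq_div_iff (by positivity)] at e1 e2 e3 e4
    rw [e1, e2, e3, e4]
    field_simp
  · rw [Nat.choose_eq_zero_of_lt (by omega : 2 * l + 1 < j),
      Nat.choose_eq_zero_of_lt (by omega : 3 * l < m)]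
    simp

/-- The coefficient of `p ^ n` in the formal expansion of `∑ l, c3 l * p ^ l * (1 - p) ^ (2 * l + 1)`. -/
theorem c3_alternating_sum (n : ℕ) :
    ∑ x ∈ Finset.HasAntidiagonal.antidiagonal n, c3 x.1 * ((2 * x.1 + 1).choose x.2 : ℝ) * (-1) ^ x.2
      = if n = 0 then 1 else 0 := by
  cases n with
  | zero => simp [c3]
  | succ m =>
    rw [if_neg (by omega)]
    have hm : ((m : ℝ) + 1) ≠ 0 := by positivity
    apply mul_right_cancel₀ hm
    rw [zero_mul, ← choose_alternating_sum m, Finset.sum_mul]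
    refine Finset.sum_congr rfl fun x hx => ?_
    have := c3_mul_choose (Finset.HasAntidiagonal.mem_antidiagonal.1 hx)
    linear_combination (-1) ^ x.2 * this

/-! ### The total mass of `eta3 p` for `p ≤ 1 / 3` -/

theorem c3_nonneg (l : ℕ) : 0 ≤ c3 l := by unfold c3; positivity

/-- The single term `i = l` in the binomial expansion of `(1 / 3 + 2 / 3) ^ (3 * l)` gives the bound. -/
theorem c3_le (l : ℕ) : c3 l * (4 / 27) ^ l ≤ 1 := by
  have h1 : c3 l ≤ (3 * l).choose l := by
    unfold c3
    apply div_le_self (by positivity)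
    have : (0:ℝ) ≤ l := by positivity
    linarith
  have h2 : ((3 * l).choose l : ℝ) * (4 / 27) ^ l ≤ 1 := by
    have h := add_pow (1 / 3 : ℝ) (2 / 3) (3 * l)
    rw [show (1 / 3 : ℝ) + 2 / 3 = 1 by norm_num, one_pow] at h
    rw [h]
    refine le_trans (le_of_eq ?_) (Finset.single_le_sum (f := fun i => (1 / 3 : ℝ) ^ i * (2 / 3) ^ (3 * l - i) * ((3 * l).choose i : ℝ)) (fun i _ => by positivity)
      (Finset.mem_range.2 (by omega : l < 3 * l + 1)))
    simp only [show 3 * l - l = 2 * l by omega]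
    rw [pow_mul, ← mul_pow]; norm_num; ring
  refine le_trans ?_ h2
  gcongr

theorem c3_le_pow (l : ℕ) : c3 l ≤ 8 ^ l := by
  have h := c3_le l
  have h2 : (1:ℝ) ≤ 8 ^ l * (4 / 27) ^ l := by
    rw [← mul_pow]; exact one_le_pow₀ (by norm_num)
  have : (0:ℝ) < (4 / 27) ^ l := by positivity
  nlinarith

/-- For small `p` the double series in `l` and the binomial expansion of `(1 - p) ^ (2 * l + 1)`
converges absolutely, and can be summed along antidiagonals. -/
theorem hasSum_eta3_small {p : ℝ} (hp : 0 < p) (hp' : p < 1 / 100) : HasSum (eta3 p) 1 := by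
  set T : ℕ × ℕ → ℝ := fun x => c3 x.1 * ((2 * x.1 + 1).choose x.2 : ℝ) * (-1) ^ x.2 * p ^ (x.1 + x.2)
    with hT
  have hrow : ∀ (t : ℝ) (l : ℕ), HasSum
      (fun j : ℕ => c3 l * ((2 * l + 1).choose j : ℝ) * t ^ j * p ^ (l + j))
      (c3 l * p ^ l * (1 + t * p) ^ (2 * l + 1)) := by
    intro t l
    have : c3 l * p ^ l * (1 + t * p) ^ (2 * l + 1) = ∑ j ∈ Finset.range (2 * l + 1 + 1),
        c3 l * ((2 * l + 1).choose j : ℝ) * t ^ j * p ^ (l + j) := by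
      rw [add_comm 1, add_pow, Finset.mul_sum]
      refine Finset.sum_congr rfl fun j _ => ?_
      rw [mul_pow, pow_add]; ring
    rw [this]
    apply hasSum_sum_of_ne_finset_zero
    intro j hj
    rw [Finset.mem_range, not_lt] at hj
    rw [Nat.choose_eq_zero_of_lt (by omega)]; simp
  have hnorm : ∀ x, ‖T x‖ = c3 x.1 * ((2 * x.1 + 1).choose x.2 : ℝ) * 1 ^ x.2 * p ^ (x.1 + x.2) := by
    intro x
    simp [hT, abs_of_nonneg (c3_nonneg x.1), abs_of_pos hp]
  have hsum : Summable T := by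
    apply Summable.of_norm
    rw [summable_prod_of_nonneg (fun x => norm_nonneg _)]
    simp only [hnorm]
    refine ⟨fun l => (hrow 1 l).summable, ?_⟩
    simp only [(hrow 1 _).tsum_eq]
    refine Summable.of_nonneg_of_le (fun l => by have := c3_nonneg l; positivity) (fun l => ?_)
      ((summable_geometric_of_lt_one (r := 8 * (1 / 100) * 2 ^ 2) (by norm_num)
        (by norm_num)).mul_left 2)
    have h1 : c3 l * p ^ l * (1 + 1 * p) ^ (2 * l + 1) ≤ 8 ^ l * (1 / 100) ^ l * 2 ^ (2 * l + 1) := by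
      have := c3_le_pow l
      have := c3_nonneg l
      gcongr
      linarith
    refine h1.trans (le_of_eq ?_)
    rw [pow_succ, pow_mul, mul_pow, mul_pow]; ring
  have hS := hsum.hasSum
  have h1 : HasSum (eta3 p) (∑' x, T x) := by
    convert hS.prod_fiberwise fun l => hrow (-1) l using 1
    funext l
    rw [eta3]; ring
  have h2 : HasSum (fun n : ℕ => if n = 0 then (1:ℝ) else 0) (∑' x, T x) := by
    have := (Finset.HasAntidiagonal.sigmaAntidiagonalEquivProd.hasSum_iff.2 hS).sigma
      (fun n => hasSum_fintype _)
    convert this using 2 with n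
    rw [Finset.univ_eq_attach]
    refine Eq.trans ?_ (Finset.sum_attach (Finset.HasAntidiagonal.antidiagonal n) T).symm
    have h : ∀ x ∈ Finset.HasAntidiagonal.antidiagonal n,
        T x = c3 x.1 * ((2 * x.1 + 1).choose x.2 : ℝ) * (-1) ^ x.2 * p ^ n := fun x hx => by
      rw [← Finset.HasAntidiagonal.mem_antidiagonal.1 hx]
    rw [Finset.sum_congr rfl h, ← Finset.sum_mul, c3_alternating_sum]
    by_cases hn : n = 0 <;> simp [hn]
  rwa [h2.unique (hasSum_ite_eq 0 1)] at h1

/-- The map `p ↦ p (1 - p)²` attains the radius of convergence `4 / 27` only at `p = 1 / 3`; the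
interval extends below `0` so that `p = 0` is interior. -/
theorem abs_arg_lt {p : ℝ} (hp : p ∈ Set.Ioo (-1 / 10 : ℝ) (1 / 3)) :
    |p * (1 - p) ^ 2| < 4 / 27 := by
  obtain ⟨h1, h2⟩ := hp
  rw [abs_lt]
  constructor
  · nlinarith [mul_pos (sub_pos.2 h1) (sub_pos.2 h2), sq_nonneg p, sq_nonneg (1 - p)]
  · nlinarith [mul_pos (mul_pos (sub_pos.2 h2) (sub_pos.2 h2)) (by linarith : (0:ℝ) < 4 / 3 - p)]

theorem summable_c3 {x : ℝ} (hx : |x| < 4 / 27) : Summable fun l => c3 l * x ^ l := by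
  apply Summable.of_norm_bounded
    (summable_geometric_of_lt_one (r := |x| / (4 / 27)) (by positivity)
      (by rw [div_lt_one (by norm_num)]; exact hx))
  intro l
  have := c3_le l
  rw [norm_mul, norm_pow, Real.norm_eq_abs, Real.norm_eq_abs, abs_of_nonneg (c3_nonneg l), div_pow,
    le_div_iff₀ (by positivity)]
  have : 0 ≤ |x| ^ l := by positivity
  nlinarith

theorem eta3_eq (p : ℝ) (l : ℕ) : eta3 p l = (1 - p) * (c3 l * (p * (1 - p) ^ 2) ^ l) := by
  rw [eta3, mul_pow, ← pow_mul]; ring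

theorem analyticOnNhd_sum : AnalyticOnNhd ℝ (fun x : ℝ => ∑' l, c3 l * x ^ l)
    {x | |x| < 4 / 27} := by
  have hr : ENNReal.ofReal (4 / 27) ≤ (FormalMultilinearSeries.ofScalars ℝ c3).radius := by
    refine FormalMultilinearSeries.le_radius_of_bound _ 1 fun n => ?_
    rw [FormalMultilinearSeries.ofScalars_norm, Real.norm_eq_abs, abs_of_nonneg (c3_nonneg n),
      Real.coe_toNNReal _ (by norm_num)]
    exact c3_le n
  have h := (FormalMultilinearSeries.ofScalars ℝ c3).hasFPowerSeriesOnBall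
    (lt_of_lt_of_le (by simp) hr)
  have e : (FormalMultilinearSeries.ofScalars ℝ c3).sum = fun x : ℝ => ∑' l, c3 l * x ^ l := by
    have := FormalMultilinearSeries.ofScalarsSum_eq_tsum (𝕜 := ℝ) (E := ℝ) c3
    simpa [FormalMultilinearSeries.ofScalarsSum] using this
  rw [e] at h
  intro x hx
  refine h.analyticAt_of_mem (Metric.eball_subset_eball hr ?_)
  rw [Metric.mem_eball, edist_zero_right, ← ofReal_norm, Real.norm_eq_abs]
  exact (ENNReal.ofReal_lt_ofReal_iff (by norm_num)).2 hx

/-- Analytic continuation from small `p` to `[0, 1 / 3)`. -/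
theorem hasSum_eta3_of_lt {p : ℝ} (hp : 0 ≤ p) (hp' : p < 1 / 3) : HasSum (eta3 p) 1 := by
  have key : Set.EqOn (fun p : ℝ => (1 - p) * ∑' l, c3 l * (p * (1 - p) ^ 2) ^ l) (fun _ => 1)
      (Set.Ioo (-1 / 10 : ℝ) (1 / 3)) := by
    have han : AnalyticOnNhd ℝ (fun p : ℝ => (1 - p) * ∑' l, c3 l * (p * (1 - p) ^ 2) ^ l)
        (Set.Ioo (-1 / 10 : ℝ) (1 / 3)) := by
      have hpoly : AnalyticOnNhd ℝ (fun p : ℝ => p * (1 - p) ^ 2) (Set.Ioo (-1 / 10 : ℝ) (1 / 3)) :=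
        fun x _ => by fun_prop
      exact AnalyticOnNhd.mul (fun x _ => by fun_prop)
        (analyticOnNhd_sum.comp hpoly fun x hx => abs_arg_lt hx)
    refine han.eqOn_of_preconnected_of_eventuallyEq (fun x _ => analyticAt_const)
      isPreconnected_Ioo (z₀ := 1 / 200) (by norm_num) ?_
    filter_upwards [Ioo_mem_nhds (show (0:ℝ) < 1 / 200 by norm_num)
      (show (1 / 200 : ℝ) < 1 / 100 by norm_num)] with x hx
    have := (hasSum_eta3_small hx.1 hx.2).tsum_eq
    simp only [eta3_eq] at this
    rwa [tsum_mul_left] at this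
  have hm : p ∈ Set.Ioo (-1 / 10 : ℝ) (1 / 3) := ⟨by linarith, hp'⟩
  have := (summable_c3 (abs_arg_lt hm)).hasSum.mul_left (1 - p)
  simp only [← eta3_eq] at this
  rwa [show (1 - p) * ∑' l, c3 l * (p * (1 - p) ^ 2) ^ l = 1 from key hm] at this

/-- The boundary case: partial sums are bounded by continuity, and the sum is at least
`(1 - 1 / 3) / (1 - p)` for all `p < 1 / 3` by monotonicity of `p (1 - p)²`. -/
theorem hasSum_eta3_third : HasSum (eta3 (1 / 3)) 1 := by
  have hx0 : ∀ p : ℝ, 0 ≤ p → 0 ≤ p * (1 - p) ^ 2 := fun p hp => by positivity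
  have hnn : ∀ p : ℝ, 0 ≤ p → p ≤ 1 / 3 → ∀ l, 0 ≤ eta3 p l := fun p hp hp' l => by
    rw [eta3]
    have := c3_nonneg l
    have : 0 ≤ 1 - p := by linarith
    positivity
  have hev : ∀ᶠ p in nhdsWithin (1 / 3 : ℝ) (Set.Iio (1 / 3)), 0 ≤ p ∧ p < 1 / 3 :=
    Filter.Eventually.and
      (nhdsWithin_le_nhds ((lt_mem_nhds (by norm_num : (0:ℝ) < 1 / 3)).mono fun _ h => le_of_lt h))
      self_mem_nhdsWithin
  have hpart : ∀ s : Finset ℕ, ∑ l ∈ s, eta3 (1 / 3) l ≤ 1 := by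
    intro s
    have hc : Continuous fun p => ∑ l ∈ s, eta3 p l := by unfold eta3; fun_prop
    refine le_of_tendsto ((hc.tendsto (1 / 3)).mono_left
      (nhdsWithin_le_nhds (s := Set.Iio (1 / 3)))) (hev.mono fun p hp => ?_)
    exact sum_le_hasSum s (fun l _ => hnn p hp.1 hp.2.le l) (hasSum_eta3_of_lt hp.1 hp.2)
  have hsum : Summable (eta3 (1 / 3)) :=
    summable_of_sum_le (hnn _ (by norm_num) le_rfl) hpart
  have hle : ∑' l, eta3 (1 / 3) l ≤ 1 := hsum.tsum_le_of_sum_le hpart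
  have hge : 1 ≤ ∑' l, eta3 (1 / 3) l := by
    have ht : Filter.Tendsto (fun p : ℝ => (1 - p)⁻¹ * (1 - 1 / 3))
        (nhdsWithin (1 / 3 : ℝ) (Set.Iio (1 / 3))) (nhds 1) := by
      have : ContinuousAt (fun p : ℝ => (1 - p)⁻¹ * (1 - 1 / 3)) (1 / 3) := by
        fun_prop (disch := norm_num)
      have h := this.tendsto.mono_left (nhdsWithin_le_nhds (s := Set.Iio (1 / 3)))
      norm_num at h ⊢
      exact h
    refine le_of_tendsto ht (hev.mono fun p hp => ?_)
    have h1p : (0:ℝ) < 1 - p := by linarith [hp.2]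
    have h := (hasSum_eta3_of_lt hp.1 hp.2).mul_left ((1 - p)⁻¹ * (1 - 1 / 3))
    rw [mul_one] at h
    refine hasSum_le (fun l => ?_) h hsum.hasSum
    rw [eta3_eq, eta3_eq, show (1 - p)⁻¹ * (1 - 1 / 3) * ((1 - p) * (c3 l * (p * (1 - p) ^ 2) ^ l))
      = (1 - 1 / 3) * (c3 l * (p * (1 - p) ^ 2) ^ l) by field_simp]
    have := c3_nonneg l
    have h0 := hx0 p hp.1
    have h3 : p * (1 - p) ^ 2 ≤ 1 / 3 * (1 - 1 / 3) ^ 2 := by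
      have := (abs_lt.1 (abs_arg_lt (p := p) ⟨by linarith [hp.1], hp.2⟩)).2
      norm_num; exact this.le
    gcongr
  have h := hsum.hasSum
  rwa [le_antisymm hle hge] at h

/-! ### Monotone couplings on `ℕ∞` -/

theorem tsum_enat (f : ℕ∞ → ENNReal) : ∑' x, f x = f ⊤ + ∑' k : ℕ, f k := by
  rw [ENNReal.summable.tsum_eq_add_tsum_ite' (f := f) ⊤]
  congr 1
  have hinj : Function.Injective (fun k : ℕ => (k : ℕ∞)) := fun a b h => by simpa using h
  rw [← hinj.tsum_eq]
  · simp
  · intro x hx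
    induction x using ENat.recTopCoe with
    | top => simp at hx
    | coe k => exact ⟨k, rfl⟩

theorem exists_pmf {b : ℕ → ℝ} {q : ℝ} (hb : ∀ k, 0 ≤ b k) (hs : HasSum b q) (hq : q ≤ 1) :
    ∃ D : PMF ℕ∞, (∀ k : ℕ, D k = ENNReal.ofReal (b k)) ∧ D ⊤ = ENNReal.ofReal (1 - q) := by
  refine ⟨⟨fun x => ENat.recTopCoe (ENNReal.ofReal (1 - q)) (fun k => ENNReal.ofReal (b k)) x, ?_⟩,
    fun k => rfl, rfl⟩
  rw [ENNReal.summable.hasSum_iff, tsum_enat]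
  simp only [ENat.recTopCoe_top, ENat.recTopCoe_natCast]
  rw [← ENNReal.ofReal_tsum_of_nonneg hb hs.summable, hs.tsum_eq,
    ← ENNReal.ofReal_add (by linarith) (hs.nonneg hb)]
  simp

theorem pmf_enat_ext {A B : PMF ℕ∞} (h : ∀ k : ℕ, A k = B k) : A = B := by
  have hA := A.tsum_coe
  have hB := B.tsum_coe
  rw [tsum_enat] at hA hB
  simp only [h] at hA
  have hne : ∑' k : ℕ, B k ≠ ⊤ := fun h' => by simp [h'] at hB
  ext x
  induction x using ENat.recTopCoe with
  | top => exact (ENNReal.add_left_inj hne).1 (hA.trans hB.symm)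
  | coe k => exact h k

/-- A law on `ℕ∞` with smaller masses at all finite points stochastically dominates: a finite
value `k` is kept with probability `B k / A k` and sent to `⊤` otherwise. -/
theorem exists_coupling {A B : PMF ℕ∞} (h : ∀ k : ℕ, B k ≤ A k) :
    ∃ C : PMF (ℕ∞ × ℕ∞), C.map Prod.fst = A ∧ C.map Prod.snd = B ∧
      ∀ x ∈ C.support, x.1 ≤ x.2 := by
  have hK : ∀ x : ℕ∞, ∃ K : PMF ℕ∞,
      (∀ j : ℕ, K j = if x = j then B j / A j else 0) ∧ ∀ y ∈ K.support, x ≤ y := by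
    intro x
    induction x using ENat.recTopCoe with
    | top => 
      refine ⟨PMF.pure ⊤, fun j => by simp, fun y hy => ?_⟩
      simp at hy; simp [hy]
    | coe k =>
      have hr : B k / A k ≤ 1 := ENNReal.div_le_of_le_mul (by simpa using h k)
      have hrt : B k / A k ≠ ⊤ := ne_top_of_le_ne_top ENNReal.one_ne_top hr
      obtain ⟨D, hD, -⟩ := exists_pmf
        (b := fun j => if j = k then (B k / A k).toReal else 0)
        (fun j => by split_ifs <;> positivity) (hasSum_ite_eq k _)
        (ENNReal.toReal_le_of_le_ofReal one_pos.le (by simpa using hr))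
      refine ⟨D, fun j => ?_, fun y hy => ?_⟩
      · rw [hD]
        by_cases hjk : j = k
        · subst hjk
          rw [if_pos rfl, if_pos rfl, ENNReal.ofReal_toReal hrt]
        · simp [hjk, Ne.symm hjk]
      · induction y using ENat.recTopCoe with
        | top => exact le_top
        | coe j =>
          rw [PMF.mem_support_iff, hD] at hy
          by_cases hjk : j = k
          · exact hjk ▸ le_rfl
          · simp [hjk] at hy
  choose K hK hsupp using hK
  -- It suffices to identify the second marginal at finite points, where only `x = j` contributes.
  refine ⟨A.bind fun x => (K x).map (fun y => (x, y)), ?_, ?_, ?_⟩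
  · simp only [PMF.map_bind, PMF.map_comp]
    change (A.bind fun x => (K x).map (Function.const _ x)) = A
    simp only [PMF.map_const, PMF.bind_pure]
  · simp only [PMF.map_bind, PMF.map_comp, Function.comp_def]
    refine pmf_enat_ext fun j => ?_
    change (A.bind fun x => (K x).map id) j = _
    simp only [PMF.map_id, PMF.bind_apply, hK]
    rw [tsum_eq_single (j : ℕ∞) (by intro x hx; simp [hx])]
    simp only [if_true]
    by_cases h0 : A j = 0
    · have := h j
      simp_all
    · exact ENNReal.mul_div_cancel h0 (A.apply_ne_top _)
  · intro x hx
    simp only [PMF.mem_support_bind_iff, PMF.mem_support_map_iff] at hx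
    obtain ⟨a, -, y, hy, rfl⟩ := hx
    exact hsupp a y hy

theorem pair_apply {α β : Type*} (A : PMF α) (B : α → PMF β) (x : α) (y : β) :
    (A.bind fun i => (B i).map (fun l => (i, l))) (x, y) = A x * B x y := by
  classical
  rw [PMF.bind_apply, tsum_eq_single x]
  · rw [PMF.map_apply, tsum_eq_single y]
    · simp
    · intro b hb; simp [Ne.symm hb]
  · intro a ha
    rw [PMF.map_apply]
    simp [Ne.symm ha]

/-- Couplings of two-step laws: the first coordinates are coupled, and then, given their values
`(i, j)`, the second ones. The hypothesis `hB` is only needed for `i` of positive mass. -/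
theorem exists_coupling_pair {A A' : PMF ℕ∞} {B B' : ℕ∞ → PMF ℕ∞}
    (hA : ∀ k : ℕ, A' k ≤ A k)
    (hB : ∀ i ∈ A.support, ∀ j, i ≤ j → ∀ k : ℕ, B' j k ≤ B i k) :
    ∃ C : PMF ((ℕ∞ × ℕ∞) × (ℕ∞ × ℕ∞)),
      C.map Prod.fst = (A.bind fun i => (B i).map (fun l => (i, l))) ∧
      C.map Prod.snd = (A'.bind fun i => (B' i).map (fun l => (i, l))) ∧
      ∀ x ∈ C.support, x.1.1 ≤ x.2.1 ∧ x.1.2 ≤ x.2.2 := by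
  obtain ⟨C₁, h₁, h₂, hle⟩ := exists_coupling hA
  have hC : ∀ z : ℕ∞ × ℕ∞, ∃ C : PMF (ℕ∞ × ℕ∞), C.map Prod.fst = B z.1 ∧
      C.map Prod.snd = B' z.2 ∧ (z ∈ C₁.support → ∀ x ∈ C.support, x.1 ≤ x.2) := by
    intro z
    by_cases hz : z ∈ C₁.support
    · have hz1 : z.1 ∈ A.support := by
        rw [← h₁, PMF.mem_support_map_iff]; exact ⟨z, hz, rfl⟩
      obtain ⟨C, a, b, c⟩ := exists_coupling (hB z.1 hz1 z.2 (hle z hz))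
      exact ⟨C, a, b, fun _ => c⟩
    -- Off the support any coupling of `B z.1` and `B' z.2` serves; the product is taken.
    · refine ⟨(B z.1).bind fun x => (B' z.2).map fun y => (x, y), ?_, ?_, fun h => absurd h hz⟩
      · simp only [PMF.map_bind, PMF.map_comp]
        change ((B z.1).bind fun x => (B' z.2).map (Function.const _ x)) = _
        simp only [PMF.map_const, PMF.bind_pure]
      · simp only [PMF.map_bind, PMF.map_comp]
        change ((B z.1).bind fun x => (B' z.2).map id) = _
        simp only [PMF.map_id, PMF.bind_const]
  choose C hCf hCs hCle using hC
  refine ⟨C₁.bind fun z => (C z).map fun w => ((z.1, w.1), (z.2, w.2)), ?_, ?_, ?_⟩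
  · rw [← h₁, PMF.bind_map]
    simp only [PMF.map_bind, PMF.map_comp, Function.comp_def, ← hCf]
  · rw [← h₂, PMF.bind_map]
    simp only [PMF.map_bind, PMF.map_comp, Function.comp_def, ← hCs]
  · intro x hx
    simp only [PMF.mem_support_bind_iff, PMF.mem_support_map_iff] at hx
    obtain ⟨z, hz, w, hw, rfl⟩ := hx
    exact ⟨hle z hz, hCle z hz w hw⟩

/-! ### The weights in terms of `s = √(3p)` and `q = s (1 - etaInf3 p)` -/

/-- The weight `x * eta3 (x² / 3) l` depends on `x` only through `x (3 - x²)`. -/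
theorem mul_eta3_sq (x : ℝ) (l : ℕ) :
    x * eta3 (x ^ 2 / 3) l = c3 l * (x * (3 - x ^ 2)) ^ (2 * l + 1) / 3 ^ (3 * l + 1) := by
  rw [eta3, show 1 - x ^ 2 / 3 = (3 - x ^ 2) / 3 by ring, div_pow, div_pow, mul_pow,
    show (3 : ℝ) ^ (3 * l + 1) = 3 ^ l * 3 ^ (2 * l + 1) by rw [← pow_add]; congr 1; ring,
    ← pow_mul]
  field_simp
  ring

/-- The parametrization by the conic `s² + s q + q² = 3`; the last equation identifies
`1 - s q` as the mass of `(∞, ∞)`. -/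
theorem exists_params {p : ℝ} (h1 : 1 / 3 ≤ p) (h2 : p ≤ 1) : ∃ s q : ℝ,
    √(3 * p) = s ∧ p = s ^ 2 / 3 ∧ 1 ≤ s ∧ 0 ≤ q ∧ q ≤ 1 ∧ s ^ 2 + s * q + q ^ 2 = 3 ∧
    s * (1 - etaInf3 p) = q ∧ p * etaInf3 p ^ 2 = 1 - s * q := by
  have hp : 0 < p := by linarith
  have hs2 : √(3 * p) ^ 2 = 3 * p := Real.sq_sqrt (by linarith)
  have hs1 : 1 ≤ √(3 * p) := Real.one_le_sqrt.2 (by linarith)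
  have hr : √(3 * p) = √3 * √p := Real.sqrt_mul (by norm_num) p
  have hrp : 0 < √p := Real.sqrt_pos.2 hp
  have h3 : √3 ^ 2 = (3:ℝ) := Real.sq_sqrt (by norm_num)
  have ht2 : √(4 - 3 * p) ^ 2 = 4 - 3 * p := Real.sq_sqrt (by linarith)
  have hrt : √p ≤ √(4 - 3 * p) := Real.sqrt_le_sqrt (by linarith)
  have hq : √(3 * p) * (1 - etaInf3 p) = √3 * (√(4 - 3 * p) - √p) / 2 := by
    rw [etaInf3, hr]; field_simp; ring
  have hq0 : 0 ≤ √(3 * p) * (1 - etaInf3 p) := by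
    rw [hq]; have := sub_nonneg.2 hrt; positivity
  have hcon : √(3 * p) ^ 2 + √(3 * p) * (√(3 * p) * (1 - etaInf3 p)) +
      (√(3 * p) * (1 - etaInf3 p)) ^ 2 = 3 := by
    have hrp2 : √p ^ 2 = p := Real.sq_sqrt hp.le
    rw [hq, hr]
    linear_combination (√p ^ 2 / 4 * 3 + √(4 - 3 * p) ^ 2 / 4) * h3 + 3 / 4 * ht2 + 9 / 4 * hrp2
  refine ⟨√(3 * p), _, rfl, by linarith, hs1, hq0, ?_, hcon, rfl, ?_⟩
  · by_contra h
    push Not at h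
    nlinarith
  · linear_combination (- etaInf3 p ^ 2 / 3) * hs2 + hcon / 3

theorem antitone_arg {x y : ℝ} (hx : 1 ≤ x) (hxy : x ≤ y) : y * (3 - y ^ 2) ≤ x * (3 - x ^ 2) := by
  nlinarith [mul_nonneg (sub_nonneg.2 hxy) (sub_nonneg.2 hx),
    mul_nonneg (sub_nonneg.2 hxy) (sub_nonneg.2 (hx.trans hxy)),
    mul_nonneg (sub_nonneg.2 hxy) (mul_nonneg (sub_nonneg.2 hx) (sub_nonneg.2 (hx.trans hxy))),
    mul_nonneg (sub_nonneg.2 hxy) (sq_nonneg (x - 1)),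
    mul_nonneg (sub_nonneg.2 hxy) (sq_nonneg (y - 1))]

theorem mul_eta3_anti {p₁ p₂ : ℝ} (h1 : 1 / 3 ≤ p₁) (h12 : p₁ ≤ p₂) (h2 : p₂ ≤ 1) (l : ℕ) :
    √(3 * p₂) * eta3 p₂ l ≤ √(3 * p₁) * eta3 p₁ l := by
  have e : ∀ p, 1 / 3 ≤ p → p = √(3 * p) ^ 2 / 3 := fun p hp => by
    rw [Real.sq_sqrt (by linarith)]; ring
  have hs1 : 1 ≤ √(3 * p₁) := Real.one_le_sqrt.2 (by linarith)
  have hs : √(3 * p₁) ≤ √(3 * p₂) := Real.sqrt_le_sqrt (by linarith)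
  have hn : 0 ≤ 3 - √(3 * p₂) ^ 2 := by
    rw [Real.sq_sqrt (by linarith)]; linarith
  have a1 := mul_eta3_sq √(3 * p₁) l
  have a2 := mul_eta3_sq √(3 * p₂) l
  rw [← e p₁ h1] at a1
  rw [← e p₂ (h1.trans h12)] at a2
  rw [a1, a2]
  have := c3_nonneg l
  have := antitone_arg hs1 hs
  gcongr

theorem mul_eta3_nonneg {p : ℝ} (h1 : 1 / 3 ≤ p) (h2 : p ≤ 1) (l : ℕ) :
    0 ≤ √(3 * p) * eta3 p l := by
  have := c3_nonneg l
  have : 0 ≤ 1 - p := by linarith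
  have : 0 ≤ p := by linarith
  unfold eta3; positivity

/-- The parameters `s² / 3 = p` and `q² / 3 ≤ 1 / 3` have the same value of `x (1 - x)²`, which
reduces the sum to the total mass `1` of `eta3 (q² / 3)`. -/
theorem hasSum_mul_eta3 {p : ℝ} (h1 : 1 / 3 ≤ p) (h2 : p ≤ 1) :
    HasSum (fun l => √(3 * p) * eta3 p l) (√(3 * p) * (1 - etaInf3 p)) := by
  obtain ⟨s, q, hs, hp, hs1, hq0, hq1, hcon, hq, -⟩ := exists_params h1 h2
  rw [hs, hq]
  have hF : HasSum (eta3 (q ^ 2 / 3)) 1 := by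
    rcases hq1.eq_or_lt with h | h
    · rw [h, one_pow]; exact hasSum_eta3_third
    · exact hasSum_eta3_of_lt (by positivity) (by nlinarith)
  have h := hF.mul_left q
  rw [mul_one] at h
  have harg : s * (3 - s ^ 2) = q * (3 - q ^ 2) := by linear_combination (q - s) * hcon
  have heq : (fun l => s * eta3 p l) = fun l => q * eta3 (q ^ 2 / 3) l := by
    funext l
    rw [hp, mul_eta3_sq, mul_eta3_sq, harg]
  rwa [heq]

theorem f3_bounds {p : ℝ} (h1 : 1 / 3 ≤ p) (h2 : p ≤ 1) : 0 ≤ f3 p ∧ f3 p ≤ 1 := by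
  obtain ⟨s, q, hs, hp, hs1, hq0, hq1, hcon, hq, -⟩ := exists_params h1 h2
  rw [f3, hs, hq]
  refine ⟨div_nonneg (by linarith) (by linarith), div_le_one_of_le₀ ?_ (by linarith)⟩
  nlinarith [sq_nonneg (s - q)]

/-- At `p = 1 / 3` the quotient defining `f3` is `0 / 0`, so this point is excluded. -/
theorem f3_anti {p₁ p₂ : ℝ} (h1 : 1 / 3 < p₁) (h12 : p₁ ≤ p₂) (h2 : p₂ ≤ 1) :
    f3 p₂ ≤ f3 p₁ := by
  obtain ⟨s, q, hs, hp, hs1, hq0, hq1, hcon, hq, -⟩ := exists_params h1.le (h12.trans h2)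
  obtain ⟨s', q', hs', hp', hs1', hq0', hq1', hcon', hq', -⟩ := exists_params (h1.le.trans h12) h2
  have hss : s ≤ s' := by rw [← hs, ← hs']; exact Real.sqrt_le_sqrt (by linarith)
  have hsgt : 1 < s := by nlinarith
  have hqlt : q < 1 := by nlinarith
  have hqlt' : q' < 1 := by nlinarith
  rw [f3, f3, hs, hq, hs', hq', div_le_div_iff₀ (by linarith) (by linarith)]
  -- With `s = 1 + σ` and `q = 1 - t σ`, `f3 = 1 / t`, and the conic becomes
  -- `3 (t - 1) = σ (1 - t + t ^ 2)`, along which `t` increases with `σ`.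
  obtain ⟨σ, rfl⟩ : ∃ σ, s = 1 + σ := ⟨s - 1, by ring⟩
  obtain ⟨τ, rfl⟩ : ∃ τ, s' = 1 + τ := ⟨s' - 1, by ring⟩
  have hσ : 0 < σ := by linarith
  have hτ : 0 < τ := by linarith
  obtain ⟨t, rfl⟩ : ∃ t, q = 1 - t * σ := ⟨(1 - q) / σ, by field_simp; ring⟩
  obtain ⟨u, rfl⟩ : ∃ u, q' = 1 - u * τ := ⟨(1 - q') / τ, by field_simp; ring⟩
  have ht : 3 * (t - 1) = σ * (1 - t + t ^ 2) := by
    apply mul_left_cancel₀ hσ.ne'; linear_combination -hcon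
  have hu : 3 * (u - 1) = τ * (1 - u + u ^ 2) := by
    apply mul_left_cancel₀ hτ.ne'; linear_combination -hcon'
  have htu : t ≤ u := by
    by_contra hlt
    push Not at hlt
    have hu' : σ * (1 - u + u ^ 2) ≤ 3 * (u - 1) := by
      rw [hu]; exact mul_le_mul_of_nonneg_right (by linarith) (by nlinarith [sq_nonneg (2 * u - 1)])
    have h3 : 3 ≤ σ * (t + u - 1) := by
      refine le_of_mul_le_mul_left ?_ (sub_pos.2 hlt)
      nlinarith
    nlinarith
  nlinarith [mul_nonneg (mul_nonneg hσ.le hτ.le) (sub_nonneg.2 htu)]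

/-- The law `jointP p` as a two-step law: `A` is the law of `L*`, and also of `L**` given `L* < ∞`;
`D` is the law of `L**` given `L* = ∞`. -/
theorem exists_joint {p : ℝ} (h1 : 1 / 3 ≤ p) (h2 : p ≤ 1) : ∃ A D : PMF ℕ∞,
    (∀ k : ℕ, A k = ENNReal.ofReal (√(3 * p) * eta3 p k)) ∧
    A ⊤ = ENNReal.ofReal (1 - √(3 * p) * (1 - etaInf3 p)) ∧
    (∀ k : ℕ, D k = ENNReal.ofReal (√(3 * p) * eta3 p k * f3 p)) ∧
    ∀ x, (A.bind fun i => (if i = ⊤ then D else A).map fun l => (i, l)) x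
      = ENNReal.ofReal (jointP p x) := by
  obtain ⟨s, q, hs, hp, hs1, hq0, hq1, hcon, hq, hpη⟩ := exists_params h1 h2
  obtain ⟨hf0, hf1⟩ := f3_bounds h1 h2
  have hnn := mul_eta3_nonneg h1 h2
  have hsum := hasSum_mul_eta3 h1 h2
  obtain ⟨A, hA, hAt⟩ := exists_pmf hnn hsum (by rw [hs, hq]; exact hq1)
  obtain ⟨D, hD, hDt⟩ := exists_pmf (fun k => mul_nonneg (hnn k) hf0) (hsum.mul_right (f3 p))
    (by rw [hs, hq]; nlinarith)
  refine ⟨A, D, hA, hAt, hD, ?_⟩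
  have hqn : 0 ≤ 1 - √(3 * p) * (1 - etaInf3 p) := by rw [hs, hq]; linarith
  rintro ⟨k, l⟩
  rw [pair_apply]
  induction k using ENat.recTopCoe with
  | top =>
    rw [if_pos rfl, hAt]
    induction l using ENat.recTopCoe with
    | top =>
      rw [hDt, ← ENNReal.ofReal_mul hqn]
      change _ = ENNReal.ofReal (p * etaInf3 p ^ 2)
      congr 1
      have hff : (1 - q) * f3 p = s - 1 := by
        rw [f3, hs, hq]
        rcases hq1.eq_or_lt with h | h
        · have : s = 1 := by nlinarith
          simp [this]
        · exact mul_div_cancel₀ _ (by linarith)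
      rw [hpη, hs, hq]
      linear_combination -q * hff
    | coe l =>
      rw [hD, ← ENNReal.ofReal_mul hqn]
      rfl
  | coe k =>
    rw [if_neg (ENat.natCast_ne_top k), hA]
    induction l using ENat.recTopCoe with
    | top => rw [hAt, ← ENNReal.ofReal_mul (hnn k)]; rfl
    | coe l => rw [hA, ← ENNReal.ofReal_mul (hnn k)]; rfl

/-- For `d = 3` and `1/3 ≤ p₁ < p₂ ≤ 1`, there is a coupling of `(L*(p₁), L**(p₁))`
and `(L*(p₂), L**(p₂))` under which `L*(p₁) ≤ L*(p₂)` and `L**(p₁) ≤ L**(p₂)` a.s. -/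
theorem coupling_pair (p₁ p₂ : ℝ) (h1 : 1 / 3 ≤ p₁) (h12 : p₁ < p₂) (h2 : p₂ ≤ 1) :
    ∃ μ : MeasureTheory.Measure ((ℕ∞ × ℕ∞) × (ℕ∞ × ℕ∞)),
      MeasureTheory.IsProbabilityMeasure μ ∧
      (∀ x : ℕ∞ × ℕ∞, μ.map Prod.fst {x} = ENNReal.ofReal (jointP p₁ x)) ∧
      (∀ x : ℕ∞ × ℕ∞, μ.map Prod.snd {x} = ENNReal.ofReal (jointP p₂ x)) ∧
      μ {x | x.1.1 ≤ x.2.1 ∧ x.1.2 ≤ x.2.2} = 1 := by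
  have h2' : p₁ ≤ 1 := h12.le.trans h2
  have h1' : 1 / 3 ≤ p₂ := h1.trans h12.le
  obtain ⟨A, D, hA, hAt, hD, hjoint⟩ := exists_joint h1 h2'
  obtain ⟨A', D', hA', -, hD', hjoint'⟩ := exists_joint h1' h2
  have hanti := mul_eta3_anti h1 h12.le h2
  have hnn' := mul_eta3_nonneg h1' h2
  have hle : ∀ k : ℕ, A' k ≤ A k := fun k => by
    rw [hA, hA']; exact ENNReal.ofReal_le_ofReal (hanti k)
  obtain ⟨C, hC, hC', hCle⟩ := exists_coupling_pair (A := A) (A' := A')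
    (B := fun i => if i = ⊤ then D else A) (B' := fun i => if i = ⊤ then D' else A') hle (by
      intro i hi j hij k
      by_cases hit : i = ⊤
      · have hjt : j = ⊤ := top_le_iff.1 (hit ▸ hij)
        -- The event `L*(p₁) = ∞` is null for `p₁ = 1/3`, where `f3` takes a junk value.
        have hp1 : 1 / 3 < p₁ := by
          refine h1.lt_of_ne fun h => ?_
          subst h
          rw [hit, PMF.mem_support_iff, hAt] at hi
          obtain ⟨s, q, hs, hp, hs1, hq0, hq1, hcon, hq, -⟩ := exists_params h1 h2'
          have hs' : s = 1 := by nlinarith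
          have hq' : q = 1 := by rw [hs'] at hcon; nlinarith
          rw [hs, hq, hq', sub_self, ENNReal.ofReal_zero] at hi
          exact hi rfl
        rw [if_pos hit, if_pos hjt, hD, hD']
        exact ENNReal.ofReal_le_ofReal (mul_le_mul (hanti k) (f3_anti hp1 h12.le h2)
          (f3_bounds h1' h2).1 ((hnn' k).trans (hanti k)))
      · rw [if_neg hit]
        by_cases hjt : j = ⊤
        · rw [if_pos hjt, hA, hD']
          exact ENNReal.ofReal_le_ofReal
            ((mul_le_of_le_one_right (hnn' k) (f3_bounds h1' h2).2).trans (hanti k))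
        · rw [if_neg hjt]; exact hle k)
  refine ⟨C.toMeasure, inferInstance, fun x => ?_, fun x => ?_, ?_⟩
  · rw [PMF.toMeasure_map _ _ measurable_fst, hC,
      PMF.toMeasure_apply_singleton _ _ (measurableSet_singleton x), hjoint]
  · rw [PMF.toMeasure_map _ _ measurable_snd, hC',
      PMF.toMeasure_apply_singleton _ _ (measurableSet_singleton x), hjoint']
  · rw [PMF.toMeasure_apply_eq_one_iff _ (Set.to_countable _).measurableSet]
    exact hCle
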